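/- Let j ∈ ℕ and let (u_k) be a sequence of piecewise constant functions on [0,1] with J(u_k) ≤ j for all k, converging in L¹[0,1] to some u ∈ L¹[0,1]. Then u has a piecewise constant representative, and J(u) ≤ j. -/

import Mathlib

open MeasureTheory Filter Set
open scoped ENNReal Classical

noncomputable section

/-- The Lebesgue measure restricted to `[0,1]`. -/
def mu01 : Measure ℝ := volume.restrict (Set.Icc (0:ℝ) 1)

/-- The step function determined by partition points `x` and values `a`. -/
def stepF {m : ℕ} (x : Fin (m + 1) → ℝ) (a : Fin m → ℝ) : ℝ → ℝ := fun t =>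
  ∑ l : Fin m, Set.indicator (Set.Ioo (x l.castSucc) (x l.succ)) (fun _ => a l) t

/-- `u` is a.e. on `[0,1]` represented by the step function with partition `x` and values `a`. -/
def IsPCRep (u : ℝ → ℝ) {m : ℕ} (x : Fin (m + 1) → ℝ) (a : Fin m → ℝ) : Prop :=
  StrictMono x ∧ x 0 = 0 ∧ x (Fin.last m) = 1 ∧ ∀ᵐ t ∂mu01, u t = stepF x a t

/-- `u` is piecewise constant on `[0,1]` (up to a.e. equality). -/
def IsPC (u : ℝ → ℝ) : Prop :=
  ∃ (m : ℕ) (x : Fin (m + 1) → ℝ) (a : Fin m → ℝ), IsPCRep u x a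

/-- The number of jumps `J(u)`: the minimal number of interior partition points over all
piecewise constant representations of `u`. -/
def jumps (u : ℝ → ℝ) : ℕ :=
  sInf {jj : ℕ | ∃ (x : Fin (jj + 2) → ℝ) (a : Fin (jj + 1) → ℝ), IsPCRep u x a}

/-- `u` is piecewise constant with all jump locations inside `S`. -/
def IsPCIn (u : ℝ → ℝ) (S : Set ℝ) : Prop :=
  ∃ (m : ℕ) (x : Fin (m + 1) → ℝ) (a : Fin m → ℝ), IsPCRep u x a ∧
    ∀ i : Fin (m + 1), i ≠ 0 → i ≠ Fin.last m → x i ∈ S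

/-- The `L¹[0,1]` distance of two functions. -/
def L1dist (u v : ℝ → ℝ) : ℝ := ∫ t, |u t - v t| ∂mu01

/-- The continuous `L¹`-Potts functional `P_γ` with data `f`. -/
def Potts (γ : ℝ) (f u : ℝ → ℝ) : ℝ≥0∞ :=
  if IsPC u then ENNReal.ofReal (γ * (jumps u : ℝ) + L1dist u f) else ⊤

/-- The (semi-)discrete `L¹`-Potts functional with data `f`, restricted to piecewise
constant functions whose jumps lie in `S`. -/
def PottsIn (γ : ℝ) (f : ℝ → ℝ) (S : Set ℝ) (u : ℝ → ℝ) : ℝ≥0∞ :=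
  if IsPCIn u S then ENNReal.ofReal (γ * (jumps u : ℝ) + L1dist u f) else ⊤

/-
The pieces of a partition may shrink to a point in the limit, so partitions are allowed to have
coinciding points. These weak partitions of `[0,1]` into `j + 1` pieces form a compact set, and "`u`
is piecewise constant with at most `j` jumps" just says that `u` is a.e. constant on each piece of
some weak partition into `j + 1` pieces. Along a subsequence the partitions of `u_k` converge and
`u_k → u` a.e.; two points inside a piece of the limit partition lie inside the corresponding piece
for `u_k` for large `k`, so `u_k`, and hence `u`, agrees at these two points.
-/

open scoped Topology

section WeakPartition

variable {α β : Type*}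

/-- `x` is a partition of `[a, b]` into `m` pieces, consecutive points being allowed to coincide:
unlike strict partitions, these are stable under limits. -/
structure IsWeakPartition [Preorder α] (a b : α) {m : ℕ} (x : Fin (m + 1) → α) : Prop where
  monotone : Monotone x
  zero_eq : x 0 = a
  last_eq : x (Fin.last m) = b

/-- `f` is `μ`-a.e. equal to a constant on each open interval between consecutive points of `x`;
this holds trivially on empty intervals, so that the points of `x` may coincide. -/
def AEConstOnPieces [Preorder α] [MeasurableSpace α] (μ : Measure α) (f : α → β) {m : ℕ}
    (x : Fin (m + 1) → α) : Prop :=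
  ∀ l : Fin m, EventuallyConst f (ae (μ.restrict (Ioo (x l.castSucc) (x l.succ))))

lemma isCompact_setOf_isWeakPartition [PartialOrder α] [TopologicalSpace α]
    [OrderClosedTopology α] [CompactIccSpace α] (a b : α) (m : ℕ) :
    IsCompact {x : Fin (m + 1) → α | IsWeakPartition a b x} := by
  have hclosed : IsClosed {x : Fin (m + 1) → α | Monotone x ∧ x 0 = a ∧ x (Fin.last m) = b} :=
    isClosed_monotone.inter <| (isClosed_singleton.preimage (continuous_apply 0)).inter
      (isClosed_singleton.preimage (continuous_apply (Fin.last m)))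
  have hset : {x : Fin (m + 1) → α | IsWeakPartition a b x} =
      {x | Monotone x ∧ x 0 = a ∧ x (Fin.last m) = b} :=
    ext fun x => ⟨fun h => ⟨h.1, h.2, h.3⟩, fun h => ⟨h.1, h.2.1, h.2.2⟩⟩
  rw [hset]
  refine (isCompact_univ_pi fun _ => isCompact_Icc (a := a) (b := b)).of_isClosed_subset hclosed ?_
  rintro x ⟨hx, rfl, rfl⟩ i -
  exact ⟨hx (Fin.zero_le i), hx (Fin.le_last i)⟩

lemma IsWeakPartition.vecCons [Preorder α] {a b : α} {m : ℕ} {x : Fin (m + 1) → α}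
    (hx : IsWeakPartition a b x) : IsWeakPartition a b (Matrix.vecCons a x) where
  monotone := hx.monotone.vecCons hx.zero_eq.ge
  zero_eq := rfl
  last_eq := hx.last_eq

lemma AEConstOnPieces.vecCons [Preorder α] [MeasurableSpace α] {μ : Measure α} {f : α → β} {m : ℕ}
    {x : Fin (m + 1) → α} (hf : AEConstOnPieces μ f x) :
    AEConstOnPieces μ f (Matrix.vecCons (x 0) x) := by
  refine Fin.cases ?_ hf
  simp

lemma comp_succ_succAbove_eq_comp_castSucc_succAbove {m : ℕ} {x : Fin (m + 1) → α} {l : Fin m}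
    (h : x l.castSucc = x l.succ) : x ∘ l.succ.succAbove = x ∘ l.castSucc.succAbove := by
  funext i
  rcases lt_trichotomy i l with hi | rfl | hi
  · simp only [Function.comp_apply, Fin.succAbove_succ_of_le l i hi.le,
      Fin.succAbove_castSucc_of_lt l i hi]
  · simpa only [Function.comp_apply, Fin.succAbove_succ_self, Fin.succAbove_castSucc_self] using h
  · simp only [Function.comp_apply, Fin.succAbove_succ_of_lt l i hi,
      Fin.succAbove_castSucc_of_le l i hi.le]

lemma IsWeakPartition.comp_succAbove [Preorder α] {a b : α} {m : ℕ} {x : Fin (m + 2) → α}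
    (hx : IsWeakPartition a b x) {l : Fin (m + 1)} (h : x l.castSucc = x l.succ) :
    IsWeakPartition a b (x ∘ l.succ.succAbove) where
  monotone := hx.monotone.comp (Fin.strictMono_succAbove _).monotone
  zero_eq := by rw [Function.comp_apply, Fin.succ_succAbove_zero, hx.zero_eq]
  last_eq := by
    rw [comp_succ_succAbove_eq_comp_castSucc_succAbove h, Function.comp_apply,
      Fin.succAbove_castSucc_of_le _ _ (Fin.le_last l), Fin.succ_last, hx.last_eq]

lemma AEConstOnPieces.comp_succAbove [Preorder α] [MeasurableSpace α] {μ : Measure α} {f : α → β}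
    {m : ℕ} {x : Fin (m + 2) → α} (hf : AEConstOnPieces μ f x) {l : Fin (m + 1)}
    (h : x l.castSucc = x l.succ) : AEConstOnPieces μ f (x ∘ l.succ.succAbove) := by
  intro i
  have hleft : (x ∘ l.succ.succAbove) i.castSucc = x (l.succAbove i).castSucc := by
    rw [comp_succ_succAbove_eq_comp_castSucc_succAbove h, Function.comp_apply,
      Fin.castSucc_succAbove_castSucc]
  have hright : (x ∘ l.succ.succAbove) i.succ = x (l.succAbove i).succ := by
    rw [Function.comp_apply, Fin.succ_succAbove_succ]
  rw [hleft, hright]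
  exact hf (l.succAbove i)

lemma AEConstOnPieces.exists_isWeakPartition_of_le [Preorder α] [MeasurableSpace α]
    {μ : Measure α} {f : α → β} {a b : α} {m n : ℕ} {x : Fin (m + 1) → α}
    (hf : AEConstOnPieces μ f x) (hx : IsWeakPartition a b x) (hmn : m ≤ n) :
    ∃ y : Fin (n + 1) → α, IsWeakPartition a b y ∧ AEConstOnPieces μ f y := by
  induction n, hmn using Nat.le_induction with
  | base => exact ⟨x, hx, hf⟩
  | succ n _ ih =>
    obtain ⟨y, hy, hfy⟩ := ih
    exact ⟨Matrix.vecCons a y, hy.vecCons, hy.zero_eq ▸ hfy.vecCons⟩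

lemma AEConstOnPieces.exists_strictMono [PartialOrder α] [MeasurableSpace α] {μ : Measure α}
    {f : α → β} {a b : α} {m : ℕ} {x : Fin (m + 1) → α} (hf : AEConstOnPieces μ f x)
    (hx : IsWeakPartition a b x) :
    ∃ n ≤ m, ∃ y : Fin (n + 1) → α,
      StrictMono y ∧ IsWeakPartition a b y ∧ AEConstOnPieces μ f y := by
  induction m with
  | zero => exact ⟨0, le_rfl, x, Fin.strictMono_iff_lt_succ.2 finZeroElim, hx, hf⟩
  | succ m ih =>
    by_cases hstrict : StrictMono x
    · exact ⟨m + 1, le_rfl, x, hstrict, hx, hf⟩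
    obtain ⟨l, hl⟩ : ∃ l : Fin (m + 1), x l.castSucc = x l.succ := by
      contrapose! hstrict
      exact Fin.strictMono_iff_lt_succ.2 fun l =>
        (hx.monotone l.castSucc_lt_succ.le).lt_of_ne (hstrict l)
    obtain ⟨n, hn, hy⟩ := ih (hf.comp_succAbove hl) (hx.comp_succAbove hl)
    exact ⟨n, hn.trans m.le_succ, hy⟩

lemma exists_castSucc_le_lt_succ [LinearOrder α] {m : ℕ} {y : Fin (m + 1) → α} {t : α}
    (h0 : y 0 ≤ t) (h1 : t < y (Fin.last m)) : ∃ l : Fin m, y l.castSucc ≤ t ∧ t < y l.succ := by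
  by_contra! h
  exact h1.not_ge (Fin.induction (motive := fun i => y i ≤ t) h0 h (Fin.last m))

lemma ae_restrict_Icc_exists_mem_Ioo [LinearOrder α] [TopologicalSpace α]
    [OrderClosedTopology α] [MeasurableSpace α] [OpensMeasurableSpace α] (μ : Measure α)
    [NullSingletonClass μ] {m : ℕ} (y : Fin (m + 1) → α) :
    ∀ᵐ t ∂μ.restrict (Icc (y 0) (y (Fin.last m))),
      ∃ l : Fin m, t ∈ Ioo (y l.castSucc) (y l.succ) := by
  have hrange : ∀ᵐ t ∂μ, t ∉ range y :=
    measure_eq_zero_iff_ae_notMem.1 ((finite_range y).measure_zero μ)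
  filter_upwards [ae_restrict_of_ae hrange, ae_restrict_mem measurableSet_Icc] with t ht htI
  have hne : ∀ i, y i ≠ t := fun i hi => ht ⟨i, hi⟩
  obtain ⟨l, hl, hl'⟩ := exists_castSucc_le_lt_succ htI.1 (htI.2.lt_of_ne (hne _).symm)
  exact ⟨l, hl.lt_of_ne (hne _), hl'⟩

end WeakPartition

section Limit

variable {ι α β : Type*} [Countable ι] {L : Filter ι} [NeBot L]
  [LinearOrder α] [TopologicalSpace α] [OrderClosedTopology α]
  [MeasurableSpace α] [OpensMeasurableSpace α]
  [TopologicalSpace β] [T2Space β] {μ : Measure α} {f : ι → α → β} {g : α → β}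

lemma eventuallyConst_ae_restrict_Ioo_of_tendsto {a b : ι → α} {a' b' : α}
    (hf : ∀ k, EventuallyConst (f k) (ae (μ.restrict (Ioo (a k) (b k)))))
    (ha : Tendsto a L (𝓝 a')) (hb : Tendsto b L (𝓝 b'))
    (hfg : ∀ᵐ t ∂μ, Tendsto (fun k => f k t) L (𝓝 (g t))) :
    EventuallyConst g (ae (μ.restrict (Ioo a' b'))) := by
  simp only [(basis_sets _).eventuallyConst_iff, id] at hf ⊢
  choose s hs hfs using hf
  have hgood : ∀ᵐ t ∂μ.restrict (Ioo a' b'), t ∈ Ioo a' b' ∧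
      Tendsto (fun k => f k t) L (𝓝 (g t)) ∧ ∀ k, t ∈ Ioo (a k) (b k) → t ∈ s k :=
    (ae_restrict_mem measurableSet_Ioo).and <| (ae_restrict_of_ae hfg).and <| ae_restrict_of_ae <|
      ae_all_iff.2 fun k => (ae_restrict_iff' measurableSet_Ioo).1 (hs k)
  have hmem : ∀ t ∈ Ioo a' b', ∀ᶠ k in L, t ∈ Ioo (a k) (b k) := fun t ht =>
    (ha.eventually_lt_const ht.1).and (hb.eventually_const_lt ht.2)
  refine ⟨_, hgood, fun t ⟨ht, htlim, hts⟩ r ⟨hr, hrlim, hrs⟩ => ?_⟩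
  refine tendsto_nhds_unique_of_eventuallyEq htlim hrlim ?_
  filter_upwards [hmem t ht, hmem r hr] with k htk hrk
  exact hfs k t (hts k htk) r (hrs k hrk)

lemma AEConstOnPieces.of_tendsto {m : ℕ} {x : ι → Fin (m + 1) → α} {y : Fin (m + 1) → α}
    (hf : ∀ k, AEConstOnPieces μ (f k) (x k)) (hx : Tendsto x L (𝓝 y))
    (hfg : ∀ᵐ t ∂μ, Tendsto (fun k => f k t) L (𝓝 (g t))) : AEConstOnPieces μ g y := fun l =>
  eventuallyConst_ae_restrict_Ioo_of_tendsto (fun k => hf k l) (hx.apply_nhds l.castSucc)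
    (hx.apply_nhds l.succ) hfg

end Limit

section StepFunction

variable {u : ℝ → ℝ} {m : ℕ} {x : Fin (m + 1) → ℝ} {a : Fin m → ℝ}

lemma stepF_eq_of_mem (hx : Monotone x) {l : Fin m} {t : ℝ}
    (ht : t ∈ Ioo (x l.castSucc) (x l.succ)) : stepF x a t = a l := by
  have hne : ∀ i ≠ l, t ∉ Ioo (x i.castSucc) (x i.succ) := by
    intro i hi hti
    have hdisj := hx.pairwise_disjoint_on_Ioo_succ ((Fin.castSucc_injective m).ne hi)
    simp only [Function.onFun, Fin.orderSucc_castSucc] at hdisj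
    exact hdisj.ne_of_mem hti ht rfl
  unfold stepF
  rw [Finset.sum_eq_single l (fun i _ hi => indicator_of_notMem (hne i hi) _) (by simp),
    indicator_of_mem ht]

lemma ae_eq_stepF_iff (hx : IsWeakPartition 0 1 x) :
    u =ᵐ[mu01] stepF x a ↔
      ∀ l : Fin m, u =ᵐ[mu01.restrict (Ioo (x l.castSucc) (x l.succ))] fun _ => a l := by
  simp only [EventuallyEq, ae_restrict_iff' measurableSet_Ioo, ← ae_all_iff]
  have hcover : ∀ᵐ t ∂mu01, ∃ l : Fin m, t ∈ Ioo (x l.castSucc) (x l.succ) := by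
    simpa only [mu01, hx.zero_eq, hx.last_eq] using ae_restrict_Icc_exists_mem_Ioo volume x
  refine eventually_congr (hcover.mono fun t ⟨l, hl⟩ => ⟨fun h i hi => ?_, fun h => ?_⟩)
  · rw [h, stepF_eq_of_mem hx.monotone hi]
  · rw [h l hl, stepF_eq_of_mem hx.monotone hl]

lemma exists_isPCRep_iff :
    (∃ a, IsPCRep u x a) ↔ StrictMono x ∧ IsWeakPartition 0 1 x ∧ AEConstOnPieces mu01 u x := by
  simp only [AEConstOnPieces, eventuallyConst_iff_exists_eventuallyEq, Classical.skolem]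
  constructor
  · rintro ⟨a, hx, h0, h1, hu⟩
    have hxw : IsWeakPartition 0 1 x := ⟨hx.monotone, h0, h1⟩
    exact ⟨hx, hxw, a, (ae_eq_stepF_iff hxw).1 hu⟩
  · rintro ⟨hx, hxw, a, hu⟩
    exact ⟨a, hx, hxw.zero_eq, hxw.last_eq, (ae_eq_stepF_iff hxw).2 hu⟩

lemma isPC_and_jumps_le_iff_exists_isPCRep {j : ℕ} :
    IsPC u ∧ jumps u ≤ j ↔
      ∃ n ≤ j, ∃ (x : Fin (n + 2) → ℝ) (a : Fin (n + 1) → ℝ), IsPCRep u x a := by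
  constructor
  · rintro ⟨⟨m, x, a, hu⟩, hj⟩
    cases m with
    | zero => exact absurd (hu.2.1.symm.trans hu.2.2.1) zero_ne_one
    | succ n =>
      have hne : {n : ℕ | ∃ (x : Fin (n + 2) → ℝ) (a : Fin (n + 1) → ℝ), IsPCRep u x a}.Nonempty :=
        ⟨n, x, a, hu⟩
      exact ⟨jumps u, hj, Nat.sInf_mem hne⟩
  · rintro ⟨n, hn, x, a, hu⟩
    have hjumps : jumps u ≤ n := Nat.sInf_le ⟨x, a, hu⟩
    exact ⟨⟨n + 1, x, a, hu⟩, hjumps.trans hn⟩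

lemma isPC_and_jumps_le_iff_exists_isWeakPartition {j : ℕ} :
    IsPC u ∧ jumps u ≤ j ↔
      ∃ y : Fin (j + 2) → ℝ, IsWeakPartition 0 1 y ∧ AEConstOnPieces mu01 u y := by
  simp only [isPC_and_jumps_le_iff_exists_isPCRep, exists_isPCRep_iff]
  constructor
  · rintro ⟨n, hn, x, -, hx, hu⟩
    exact hu.exists_isWeakPartition_of_le hx (Nat.succ_le_succ hn)
  · rintro ⟨y, hy, hu⟩
    obtain ⟨n, hn, x, hx, hxw, hux⟩ := hu.exists_strictMono hy
    cases n with
    | zero => exact absurd (hxw.zero_eq.symm.trans hxw.last_eq) zero_ne_one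
    | succ n => exact ⟨n, Nat.le_of_succ_le_succ hn, x, hx, hxw, hux⟩

lemma integrable_stepF (μ : Measure ℝ) [IsFiniteMeasure μ] (x : Fin (m + 1) → ℝ)
    (a : Fin m → ℝ) : Integrable (stepF x a) μ :=
  integrable_finsetSum _ fun l _ => (integrable_const (a l)).indicator measurableSet_Ioo

instance : IsFiniteMeasure mu01 :=
  inferInstanceAs (IsFiniteMeasure (volume.restrict (Icc (0 : ℝ) 1)))

lemma IsPC.integrable (hu : IsPC u) : Integrable u mu01 := by
  obtain ⟨m, x, a, -, -, -, hux⟩ := hu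
  exact (integrable_stepF mu01 x a).congr (EventuallyEq.symm hux)

end StepFunction

lemma tendstoInMeasure_of_tendsto_L1dist {ι : Type*} {L : Filter ι} {v : ι → ℝ → ℝ} {u : ℝ → ℝ}
    (hv : ∀ k, Integrable (v k) mu01) (hu : Integrable u mu01)
    (h : Tendsto (fun k => L1dist (v k) u) L (𝓝 0)) : TendstoInMeasure mu01 v L u := by
  refine tendstoInMeasure_of_tendsto_eLpNorm one_ne_zero
    (fun k => (hv k).aestronglyMeasurable) hu.aestronglyMeasurable ?_
  have hnorm : ∀ k, eLpNorm (v k - u) 1 mu01 = ENNReal.ofReal (L1dist (v k) u) := fun k => by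
    rw [eLpNorm_one_eq_lintegral_enorm, ← ofReal_integral_norm_eq_lintegral_enorm ((hv k).sub hu)]
    rfl
  simpa only [hnorm, ENNReal.ofReal_zero] using ENNReal.tendsto_ofReal h

theorem statement_8_general (j : ℕ) (u : ℝ → ℝ) (useq : ℕ → ℝ → ℝ) (huseq : ∀ k, IsPC (useq k))
    (hj : ∀ k, jumps (useq k) ≤ j) (hconv : TendstoInMeasure mu01 useq atTop u) :
    IsPC u ∧ jumps u ≤ j := by
  choose y hy hconst using
    fun k => isPC_and_jumps_le_iff_exists_isWeakPartition.1 ⟨huseq k, hj k⟩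
  obtain ⟨z, hz, φ, hφ, hyz⟩ :=
    (isCompact_setOf_isWeakPartition (0 : ℝ) 1 (j + 1)).tendsto_subseq hy
  obtain ⟨ψ, hψ, hae⟩ := (hconv.comp hφ.tendsto_atTop).exists_seq_tendsto_ae
  exact isPC_and_jumps_le_iff_exists_isWeakPartition.2
    ⟨z, hz, .of_tendsto (fun k => hconst (φ (ψ k))) (hyz.comp hψ.tendsto_atTop) hae⟩

theorem statement_8
    (j : ℕ) (u : ℝ → ℝ) (hu : IntegrableOn u (Set.Icc 0 1))
    (useq : ℕ → ℝ → ℝ) (huseq : ∀ k, IsPC (useq k))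
    (hj : ∀ k, jumps (useq k) ≤ j)
    (hconv : Tendsto (fun k => L1dist (useq k) u) atTop (nhds 0)) :
    IsPC u ∧ jumps u ≤ j :=
  statement_8_general j u useq huseq hj
    (tendstoInMeasure_of_tendsto_L1dist (fun k => (huseq k).integrable) hu hconv)
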